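/- Let u ∈ W^{n,∞}(x_{i-1}, x_i) on an element of length h ≤ 1, and let u_{i,n} = ((2n-1)/h) ∫_{τ_i} u'(x) ψ_{i,n}'(x) dx · (normalizing so that u_{i,n} is the coefficient of ψ_{i,n} in the Lobatto expansion). Then |u_{i,n}| ≤ C_n h^n |u|_{W^{n,∞}(τ_i)}, where C_n depends only on n. -/

import Mathlib

open MeasureTheory intervalIntegral

/-- Legendre polynomial via the Rodrigues formula. -/
noncomputable def legendreP (n : ℕ) : ℝ → ℝ :=
  fun x => (1 / (2 ^ n * (n.factorial : ℝ))) * iteratedDeriv n (fun y => (y ^ 2 - 1) ^ n) x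

/-- Standard Lobatto polynomials on the reference interval `[-1,1]`. -/
noncomputable def lobatto : ℕ → ℝ → ℝ
  | 0 => fun ξ => (1 - ξ) / 2
  | 1 => fun ξ => (1 + ξ) / 2
  | (n + 2) => fun ξ => ∫ t in (-1 : ℝ)..ξ, legendreP (n + 1) t

/-- Lobatto polynomial affinely mapped to the element `(a,b)`. -/
noncomputable def lobattoMap (a b : ℝ) (n : ℕ) (x : ℝ) : ℝ :=
  lobatto n ((2 * x - a - b) / (b - a))

open Polynomial in
lemma iteratedDeriv_poly_eval (p : ℝ[X]) (k : ℕ) :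
    iteratedDeriv k (fun y => p.eval y) = fun y => (derivative^[k] p).eval y := by
  induction k with
  | zero => simp
  | succ k ih =>
    rw [iteratedDeriv_succ, ih]
    funext y
    rw [Polynomial.deriv, Function.iterate_succ_apply']

open Polynomial in
lemma legendreP_eq_eval (n : ℕ) (x : ℝ) : legendreP n x =
    (1 / (2 ^ n * (n.factorial : ℝ))) * (derivative^[n] ((X ^ 2 - 1 : ℝ[X]) ^ n)).eval x := by
  have h := congrFun (iteratedDeriv_poly_eval ((X ^ 2 - 1 : ℝ[X]) ^ n) n) x
  unfold legendreP
  rw [← h]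
  simp

lemma legendreP_continuous (n : ℕ) : Continuous (legendreP n) := by
  have : legendreP n = _ := funext (legendreP_eq_eval n)
  rw [this]
  exact continuous_const.mul (Polynomial.continuous _)

open Polynomial in
lemma rodrigues_parts (k : ℕ) : ∀ (p : ℝ[X]) (v : ℝ → ℝ), (X ^ 2 - 1 : ℝ[X]) ^ k ∣ p →
    ContDiff ℝ k v →
    ∫ x in (-1 : ℝ)..1, v x * (derivative^[k] p).eval x
      = (-1) ^ k * ∫ x in (-1 : ℝ)..1, iteratedDeriv k v x * p.eval x := by
  induction k with
  | zero => intro p v _ _; simp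
  | succ k ih =>
    intro p v hp hv
    have hd : (X ^ 2 - 1 : ℝ[X]) ∣ derivative^[k] p := by
      have := pow_sub_dvd_iterate_derivative_of_pow_dvd k hp
      simpa using this
    obtain ⟨q, hq⟩ := hd
    have hv' : Differentiable ℝ v ∧ ContDiff ℝ k (deriv v) := by
      have h2 : ContDiff ℝ ((k : WithTop ℕ∞) + 1) v := by exact_mod_cast hv
      rw [contDiff_succ_iff_deriv] at h2
      exact ⟨h2.1, h2.2.2⟩
    have hpp := integral_mul_deriv_eq_deriv_mul (a := (-1 : ℝ)) (b := 1) (u := v) (u' := deriv v)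
      (v := fun x => (derivative^[k] p).eval x)
      (v' := fun x => (derivative (derivative^[k] p)).eval x)
      (fun x _ => (hv'.1 x).hasDerivAt) (fun x _ => Polynomial.hasDerivAt _ x)
      (hv'.2.continuous.intervalIntegrable _ _)
      ((Polynomial.continuous _).intervalIntegrable _ _)
    rw [Function.iterate_succ_apply', hpp, ih p (deriv v) ((pow_dvd_pow _ (Nat.le_succ k)).trans hp) hv'.2,
      hq, iteratedDeriv_succ']
    simp [pow_succ]

lemma deriv_lobattoMap (a b : ℝ) (m : ℕ) (x : ℝ) :
    deriv (lobattoMap a b (m + 2)) x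
      = 2 / (b - a) * legendreP (m + 1) ((2 * x - a - b) / (b - a)) := by
  have h1 : HasDerivAt (lobatto (m + 2)) (legendreP (m + 1) ((2 * x - a - b) / (b - a)))
      ((2 * x - a - b) / (b - a)) := by
    have hc := legendreP_continuous (m + 1)
    exact integral_hasDerivAt_right (hc.intervalIntegrable _ _)
      (hc.stronglyMeasurableAtFilter _ _) hc.continuousAt
  have h2 : HasDerivAt (fun x : ℝ => (2 * x - a - b) / (b - a)) (2 / (b - a)) x := by
    have := (((((hasDerivAt_id x).const_mul 2).sub_const a).sub_const b).div_const (b - a))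
    simpa using this
  have := (h1.comp x h2).deriv
  rw [mul_comm, ← this]
  rfl

lemma integral_to_ref (a b : ℝ) (hab : a < b) (F : ℝ → ℝ) :
    ∫ x in a..b, F x = (b - a) / 2 * ∫ t in (-1 : ℝ)..1, F ((b - a) / 2 * t + (a + b) / 2) := by
  have hc : (b - a) / 2 ≠ 0 := by
    have : 0 < b - a := sub_pos.2 hab
    positivity
  rw [intervalIntegral.integral_comp_mul_add F hc, smul_eq_mul, mul_inv_cancel_left₀ hc]
  congr 1 <;> ring

/-- Bound for the `n`-th Lobatto expansion coefficient
`u_{i,n} = (∫ u' ψ_{i,n}')/(∫ (ψ_{i,n}')²)`:  `|u_{i,n}| ≤ C_n h^n |u|_{n,∞}`. -/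
theorem lobatto_coefficient_bound (n : ℕ) (hn : 2 ≤ n) :
    ∃ C : ℝ, 0 < C ∧
      ∀ (a b : ℝ) (u : ℝ → ℝ) (M : ℝ),
        a < b → b - a ≤ 1 → ContDiff ℝ n u →
        (∀ x ∈ Set.Icc a b, |iteratedDeriv n u x| ≤ M) →
        |(∫ x in a..b, deriv u x * deriv (lobattoMap a b n) x) /
            (∫ x in a..b, (deriv (lobattoMap a b n) x) ^ 2)|
          ≤ C * (b - a) ^ n * M := by
  obtain ⟨m, rfl⟩ : ∃ m, n = m + 2 := ⟨n - 2, by omega⟩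
  set c : ℝ := 1 / (2 ^ (m + 1) * ((m + 1).factorial : ℝ)) with hc
  have hc0 : 0 < c := by positivity
  set K : ℝ := ∫ t in (-1 : ℝ)..1, (legendreP (m + 1) t) ^ 2 with hK
  have hK0 : 0 ≤ K := intervalIntegral.integral_nonneg (by norm_num) (fun _ _ => sq_nonneg _)
  refine ⟨2 * c / K + 1, by positivity, ?_⟩
  intro a b u M hab _ hu hM
  have hh : 0 < b - a := sub_pos.2 hab
  have hM0 : 0 ≤ M := (abs_nonneg _).trans (hM a ⟨le_rfl, hab.le⟩)
  set d : ℝ := (b - a) / 2 with hd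
  have hd0 : 0 < d := by positivity
  have hxi : ∀ t : ℝ, (2 * (d * t + (a + b) / 2) - a - b) / (b - a) = t := by
    intro t
    rw [hd]
    field_simp
    ring
  have hden : (∫ x in a..b, (deriv (lobattoMap a b (m + 2)) x) ^ 2) = K / d := by
    rw [integral_to_ref a b hab]
    simp only [deriv_lobattoMap, ← hd, hxi, mul_pow]
    rw [intervalIntegral.integral_const_mul, ← hK, hd]
    field_simp
  have hu1 : ContDiff ℝ ((m + 1 : ℕ) : WithTop ℕ∞) (deriv u) := by
    have h2 : ContDiff ℝ (((m + 1 : ℕ) : WithTop ℕ∞) + 1) u := by exact_mod_cast hu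
    rw [contDiff_succ_iff_deriv] at h2
    exact h2.2.2
  set v : ℝ → ℝ := fun t => deriv u (d * t + (a + b) / 2) with hv
  have hvc : ContDiff ℝ ((m + 1 : ℕ) : WithTop ℕ∞) v := by
    exact hu1.comp ((contDiff_const.mul contDiff_id).add contDiff_const)
  have hvd : ∀ t, iteratedDeriv (m + 1) v t
      = d ^ (m + 1) * iteratedDeriv (m + 2) u (d * t + (a + b) / 2) := by
    intro t
    have h1 : ContDiff ℝ ((m + 1 : ℕ) : WithTop ℕ∞) (fun z => deriv u (z + (a + b) / 2)) :=
      hu1.comp (contDiff_id.add contDiff_const)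
    have h2 := congrFun (iteratedDeriv_comp_const_mul h1 d) t
    rw [iteratedDeriv_comp_add_const] at h2
    rw [hv, h2, iteratedDeriv_succ' (n := m + 1)]
  have hnum : (∫ x in a..b, deriv u x * deriv (lobattoMap a b (m + 2)) x)
      = c * ((-1) ^ (m + 1) * ∫ t in (-1 : ℝ)..1, iteratedDeriv (m + 1) v t *
          ((Polynomial.X ^ 2 - 1 : Polynomial ℝ) ^ (m + 1)).eval t) := by
    rw [← rodrigues_parts (m + 1) _ v dvd_rfl hvc, integral_to_ref a b hab,
      ← intervalIntegral.integral_const_mul, ← intervalIntegral.integral_const_mul]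
    refine intervalIntegral.integral_congr fun t _ => ?_
    simp only [deriv_lobattoMap, ← hd, hxi, legendreP_eq_eval, ← hc, hv]
    rw [hd]
    field_simp
  have hbound : |∫ t in (-1 : ℝ)..1, iteratedDeriv (m + 1) v t *
          ((Polynomial.X ^ 2 - 1 : Polynomial ℝ) ^ (m + 1)).eval t| ≤ d ^ (m + 1) * M * 2 := by
    have := intervalIntegral.norm_integral_le_of_norm_le_const (a := (-1 : ℝ)) (b := 1)
      (C := d ^ (m + 1) * M) (f := fun t => iteratedDeriv (m + 1) v t *
          ((Polynomial.X ^ 2 - 1 : Polynomial ℝ) ^ (m + 1)).eval t) ?_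
    · rw [Real.norm_eq_abs] at this
      norm_num at this ⊢
      exact this
    · intro t ht
      rw [Set.uIoc_of_le (by norm_num)] at ht
      have e1 : |iteratedDeriv (m + 2) u (d * t + (a + b) / 2)| ≤ M := by
        apply hM
        constructor <;> rw [hd] <;> nlinarith [ht.1, ht.2]
      have e2 : |((Polynomial.X ^ 2 - 1 : Polynomial ℝ) ^ (m + 1)).eval t| ≤ 1 := by
        simp only [Polynomial.eval_pow, Polynomial.eval_sub, Polynomial.eval_X,
          Polynomial.eval_one, abs_pow]
        apply pow_le_one₀ (abs_nonneg _)
        rw [abs_le]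
        constructor <;> nlinarith [ht.1, ht.2]
      rw [Real.norm_eq_abs, abs_mul, hvd, abs_mul, abs_of_pos (pow_pos hd0 _)]
      calc _ ≤ d ^ (m + 1) * M * 1 := by gcongr
        _ = _ := mul_one _
  rw [hnum, hden, abs_div, abs_mul, abs_mul, abs_pow, abs_neg, abs_one, one_pow, one_mul,
    abs_of_pos hc0, abs_of_nonneg (div_nonneg hK0 hd0.le)]
  calc _ ≤ c * (d ^ (m + 1) * M * 2) / (K / d) := by gcongr
    _ = 2 * c / K * d ^ (m + 2) * M := by
      rw [div_div_eq_mul_div]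
      ring
    _ ≤ (2 * c / K + 1) * (b - a) ^ (m + 2) * M := by
      gcongr
      · linarith
      · linarith
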